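/- arXiv:1609.05998 — 2 statements merged into one kernel-verified Lean document; each statement's English description precedes it below -/
import Mathlib

section
/- Let A and B be m×n complex matrices with m ≥ n and rank(A) = rank(B) = n. If the matrix B†A (with B† the Moore–Penrose pseudoinverse of B) has no negative real eigenvalues, then for every t ∈ [0,1] the matrix (1−t)A + tB has rank n. -/
open Matrix

/-!
If `(1 - t)A + tB` kills some `v ≠ 0`, then `0` lies on the segment joining the vectors `Av` and
`Bv`, both of which are nonzero. Hence `Av = c Bv` with `c < 0`, and applying a left inverse of `B`
exhibits `c` as an eigenvalue that was excluded.
-/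

theorem exists_neg_smul_eq_of_zero_mem_segment {k V : Type*} [Field k] [LinearOrder k]
    [IsStrictOrderedRing k] [AddCommGroup V] [Module k V] {x y : V} (hx : x ≠ 0) (hy : y ≠ 0)
    (h : 0 ∈ segment k x y) : ∃ c : k, c < 0 ∧ x = c • y := by
  have hray : SameRay k (-x) y := by simpa using mem_segment_iff_sameRay.mp h
  obtain ⟨r, hr, hxy⟩ := hray.exists_pos_right (neg_ne_zero.mpr hx) hy
  exact ⟨-r, neg_neg_of_pos hr, by rw [neg_smul, ← hxy, neg_neg]⟩

section FullColumnRank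

variable {K m n : Type*} [Field K] [Fintype n]

theorem rank_eq_card_iff_forall_mulVec_eq_zero {M : Matrix m n K} :
    M.rank = Fintype.card n ↔ ∀ v, M *ᵥ v = 0 → v = 0 := by
  rw [rank_eq_finrank_span_cols, eq_comm, ← Set.finrank,
    ← linearIndependent_iff_card_eq_finrank_span, ← mulVec_injective_iff]
  exact injective_iff_map_eq_zero M.mulVecLin

variable [Fintype m] [DecidableEq n]

theorem inv_conjTranspose_mul_self_mul_conjTranspose_mul_self [PartialOrder K] [StarRing K]
    [StarOrderedRing K] {B : Matrix m n K} (hB : B.rank = Fintype.card n) :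
    (Bᴴ * B)⁻¹ * Bᴴ * B = 1 := by
  have hker : ∀ v, (Bᴴ * B) *ᵥ v = 0 → v = 0 :=
    rank_eq_card_iff_forall_mulVec_eq_zero.mp (B.rank_conjTranspose_mul_self.trans hB)
  have hunit : IsUnit (Bᴴ * B) :=
    mulVec_injective_iff_isUnit.mp ((injective_iff_map_eq_zero (Bᴴ * B).mulVecLin).mpr hker)
  rw [Matrix.mul_assoc, nonsing_inv_mul _ ((isUnit_iff_isUnit_det _).mp hunit)]

theorem stmt9_general {k : Type*} [Field k] [LinearOrder k] [IsStrictOrderedRing k] [Algebra k K]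
    {A B : Matrix m n K} {C : Matrix n m K} (hA : A.rank = Fintype.card n) (hCB : C * B = 1)
    (heig : ¬ ∃ (c : k) (v : n → K), c < 0 ∧ v ≠ 0 ∧ (C * A) *ᵥ v = c • v)
    {M : Matrix m n K} (hM : M ∈ segment k A B) : M.rank = Fintype.card n := by
  obtain ⟨a, b, ha, hb, hab, rfl⟩ := hM
  rw [rank_eq_card_iff_forall_mulVec_eq_zero]
  intro v hv
  by_contra hv0
  have hAv : A *ᵥ v ≠ 0 := mt (rank_eq_card_iff_forall_mulVec_eq_zero.mp hA v) hv0
  have hCBv : C *ᵥ (B *ᵥ v) = v := by rw [mulVec_mulVec, hCB, one_mulVec]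
  have hBv : B *ᵥ v ≠ 0 := fun h ↦ hv0 (by rw [← hCBv, h, mulVec_zero])
  have hseg : 0 ∈ segment k (A *ᵥ v) (B *ᵥ v) :=
    ⟨a, b, ha, hb, hab, by rw [← smul_mulVec, ← smul_mulVec, ← add_mulVec, hv]⟩
  obtain ⟨c, hc, hAB⟩ := exists_neg_smul_eq_of_zero_mem_segment hAv hBv hseg
  exact heig ⟨c, v, hc, hv0, by rw [← mulVec_mulVec, hAB, mulVec_smul, hCBv]⟩

end FullColumnRank

/-- (Szulc) Let `A`, `B` be `m × n` complex matrices, `m ≥ n`, both of full column rank `n`.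
If `B†A` (with `B† = (B*B)⁻¹B*` the Moore–Penrose pseudoinverse of the full-column-rank
matrix `B`) has no negative real eigenvalues, then every matrix `(1−t)A + tB`, `t ∈ [0,1]`,
has rank `n`. -/
theorem stmt9 {m n : ℕ} (hmn : n ≤ m)
    (A B : Matrix (Fin m) (Fin n) ℂ)
    (hA : A.rank = n) (hB : B.rank = n)
    (heig : ¬ ∃ (c : ℝ) (v : Fin n → ℂ), c < 0 ∧ v ≠ 0 ∧
      (((Bᴴ * B)⁻¹ * Bᴴ * A).mulVec v = (c : ℂ) • v))
    (t : ℝ) (ht0 : 0 ≤ t) (ht1 : t ≤ 1) :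
    ((((1 - t : ℝ) : ℂ) • A) + ((t : ℝ) : ℂ) • B).rank = n := by
  have hcard : Fintype.card (Fin n) = n := Fintype.card_fin n
  open scoped ComplexOrder in
  have hinv := inv_conjTranspose_mul_self_mul_conjTranspose_mul_self (hB.trans hcard.symm)
  exact (stmt9_general (hA.trans hcard.symm) hinv heig
    ⟨1 - t, t, sub_nonneg.mpr ht1, ht0, sub_add_cancel 1 t, rfl⟩).trans hcard
end

section
/- Let {φᵢ}ᵢ₌₁^N and {ψᵢ}ᵢ₌₁^N be disjoint frames for ℝ^d (the ranges of their analysis operators Φ and Ψ intersect only in {0}). Then for every t ∈ [0,1], the set {(1−t)φᵢ + tψᵢ}ᵢ₌₁^N is a frame for ℝ^d; in fact there exist constants C, A₀ > 0 such that Σᵢ ⟨v, (1−t)φᵢ + tψᵢ⟩² ≥ (1 − 2t + 2t²) C A₀ ‖v‖² for all v ∈ ℝ^d. -/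
open scoped RealInnerProductSpace

/-!
Write `Φ`, `Ψ` for the analysis operators. The analysis operator of `((1 - t) φᵢ + t ψᵢ)ᵢ` maps
`v` to `(1 - t) Φ v + t Ψ v`. The two summands lie in finite-dimensional subspaces that meet only in
`0`, so up to a constant `C` the squared norm of the sum dominates
`(1 - t)² ‖Φ v‖² + t² ‖Ψ v‖²`. This is at least `((1 - t)² + t²) A₀ ‖v‖²`, where `A₀` is the
smaller of the two lower frame bounds.
-/

section BoundedBelow

variable {𝕜 V W : Type*} [NontriviallyNormedField 𝕜] [CompleteSpace 𝕜]
  [NormedAddCommGroup V] [NormedSpace 𝕜 V] [NormedAddCommGroup W] [NormedSpace 𝕜 W]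

theorem exists_pos_mul_sq_norm_le_of_ker_eq_bot [FiniteDimensional 𝕜 V] (f : V →ₗ[𝕜] W)
    (hf : f.ker = ⊥) : ∃ c : ℝ, 0 < c ∧ ∀ x, c * ‖x‖ ^ 2 ≤ ‖f x‖ ^ 2 := by
  obtain ⟨K, hK, hlip⟩ := f.exists_antilipschitzWith hf
  refine ⟨((K : ℝ) ^ 2)⁻¹, by positivity, fun x => (inv_mul_le_iff₀ (by positivity)).2 ?_⟩
  rw [← mul_pow]
  gcongr
  exact hlip.le_mul_norm (map_zero f) x

theorem exists_pos_mul_add_sq_norm_le_of_disjoint {P Q : Submodule 𝕜 V}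
    [FiniteDimensional 𝕜 P] [FiniteDimensional 𝕜 Q] (h : Disjoint P Q) :
    ∃ C : ℝ, 0 < C ∧ ∀ p ∈ P, ∀ q ∈ Q, C * (‖p‖ ^ 2 + ‖q‖ ^ 2) ≤ ‖p + q‖ ^ 2 := by
  have hker : (P.subtype.coprod Q.subtype).ker = ⊥ := by
    rw [LinearMap.ker_coprod_of_disjoint_range _ _ (by simpa using h), P.ker_subtype,
      Q.ker_subtype, Submodule.prod_bot]
  obtain ⟨c, hc, hbound⟩ := exists_pos_mul_sq_norm_le_of_ker_eq_bot _ hker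
  refine ⟨c / 2, by positivity, fun p hp q hq => ?_⟩
  let x : P × Q := (⟨p, hp⟩, ⟨q, hq⟩)
  have hp_le : ‖p‖ ≤ ‖x‖ := norm_fst_le x
  have hq_le : ‖q‖ ≤ ‖x‖ := norm_snd_le x
  calc c / 2 * (‖p‖ ^ 2 + ‖q‖ ^ 2) ≤ c / 2 * (‖x‖ ^ 2 + ‖x‖ ^ 2) := by gcongr
    _ = c * ‖x‖ ^ 2 := by ring
    _ ≤ ‖p + q‖ ^ 2 := hbound x

end BoundedBelow

section AnalysisOperator

variable {𝕜 ι E : Type*} [RCLike 𝕜] [NormedAddCommGroup E] [InnerProductSpace 𝕜 E]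

variable (𝕜) in
/-- The analysis operator `v ↦ (⟨v, φᵢ⟩)ᵢ` of a family of vectors, with values in the Euclidean
space `EuclideanSpace 𝕜 ι`. Since `inner 𝕜` is linear in its second argument, the coefficient
`⟨v, φᵢ⟩` is encoded as `inner 𝕜 (φ i) v`. -/
noncomputable def analysisOperator (φ : ι → E) : E →ₗ[𝕜] EuclideanSpace 𝕜 ι :=
  (WithLp.linearEquiv 2 𝕜 (ι → 𝕜)).symm.toLinearMap ∘ₗ LinearMap.pi fun i => innerₛₗ 𝕜 (φ i)

@[simp]
theorem analysisOperator_apply (φ : ι → E) (v : E) (i : ι) :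
    analysisOperator 𝕜 φ v i = inner 𝕜 (φ i) v :=
  rfl

theorem analysisOperator_smul_add_smul (φ ψ : ι → E) (a b : 𝕜) (v : E) :
    analysisOperator 𝕜 (a • φ + b • ψ) v =
      star a • analysisOperator 𝕜 φ v + star b • analysisOperator 𝕜 ψ v := by
  ext i
  simp [inner_add_left, inner_smul_left]

theorem ker_analysisOperator (φ : ι → E) :
    (analysisOperator 𝕜 φ).ker = (Submodule.span 𝕜 (Set.range φ))ᗮ := by
  ext v
  rw [← Submodule.span_singleton_le_iff_mem v (Submodule.orthogonal _), ← Submodule.isOrtho_iff_le,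
    Submodule.isOrtho_comm, Submodule.isOrtho_span]
  simp [PiLp.ext_iff]

theorem disjoint_range_analysisOperator_iff (φ ψ : ι → E) :
    Disjoint (analysisOperator 𝕜 φ).range (analysisOperator 𝕜 ψ).range ↔
      Set.range (fun v i => inner 𝕜 (φ i) v) ∩ Set.range (fun v i => inner 𝕜 (ψ i) v) = {0} := by
  have hinj : Function.Injective (WithLp.ofLp : EuclideanSpace 𝕜 ι → ι → 𝕜) :=
    WithLp.ofLp_injective 2
  rw [disjoint_iff, ← SetLike.coe_set_eq, Submodule.coe_inf, LinearMap.coe_range,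
    LinearMap.coe_range, Submodule.bot_coe, ← hinj.image_injective.eq_iff, Set.image_inter hinj,
    ← Set.range_comp, ← Set.range_comp, Set.image_singleton]
  rfl

variable [Fintype ι]

theorem norm_analysisOperator_sq (φ : ι → E) (v : E) :
    ‖analysisOperator 𝕜 φ v‖ ^ 2 = ∑ i, ‖inner 𝕜 (φ i) v‖ ^ 2 :=
  EuclideanSpace.norm_sq_eq _

theorem exists_lower_frame_bound_of_span_eq_top {φ : ι → E}
    (hφ : Submodule.span 𝕜 (Set.range φ) = ⊤) :
    ∃ A : ℝ, 0 < A ∧ ∀ v, A * ‖v‖ ^ 2 ≤ ‖analysisOperator 𝕜 φ v‖ ^ 2 := by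
  have hker : (analysisOperator 𝕜 φ).ker = ⊥ := by
    rw [ker_analysisOperator, hφ, Submodule.top_orthogonal_eq_bot]
  have : FiniteDimensional 𝕜 E := .of_injective _ (LinearMap.ker_eq_bot.1 hker)
  exact exists_pos_mul_sq_norm_le_of_ker_eq_bot _ hker

theorem stmt15_general {φ ψ : ι → E}
    (hφ : Submodule.span 𝕜 (Set.range φ) = ⊤) (hψ : Submodule.span 𝕜 (Set.range ψ) = ⊤)
    (hdisj : Disjoint (analysisOperator 𝕜 φ).range (analysisOperator 𝕜 ψ).range) :
    ∃ C A₀ : ℝ, 0 < C ∧ 0 < A₀ ∧ ∀ (a b : 𝕜) (v : E),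
      (‖a‖ ^ 2 + ‖b‖ ^ 2) * C * A₀ * ‖v‖ ^ 2 ≤ ∑ i, ‖inner 𝕜 (a • φ i + b • ψ i) v‖ ^ 2 := by
  obtain ⟨C, hC, hsum⟩ := exists_pos_mul_add_sq_norm_le_of_disjoint hdisj
  obtain ⟨A, hA, hφA⟩ := exists_lower_frame_bound_of_span_eq_top hφ
  obtain ⟨B, hB, hψB⟩ := exists_lower_frame_bound_of_span_eq_top hψ
  refine ⟨C, min A B, hC, lt_min hA hB, fun a b v => ?_⟩
  set Φ := analysisOperator 𝕜 φ
  set Ψ := analysisOperator 𝕜 ψ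
  calc (‖a‖ ^ 2 + ‖b‖ ^ 2) * C * min A B * ‖v‖ ^ 2
      = C * (‖a‖ ^ 2 * (min A B * ‖v‖ ^ 2) + ‖b‖ ^ 2 * (min A B * ‖v‖ ^ 2)) := by ring
    _ ≤ C * (‖a‖ ^ 2 * (A * ‖v‖ ^ 2) + ‖b‖ ^ 2 * (B * ‖v‖ ^ 2)) := by
        gcongr
        exacts [min_le_left A B, min_le_right A B]
    _ ≤ C * (‖a‖ ^ 2 * ‖Φ v‖ ^ 2 + ‖b‖ ^ 2 * ‖Ψ v‖ ^ 2) := by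
        gcongr
        exacts [hφA v, hψB v]
    _ = C * (‖star a • Φ v‖ ^ 2 + ‖star b • Ψ v‖ ^ 2) := by
        simp only [norm_smul, norm_star, mul_pow]
    _ ≤ ‖star a • Φ v + star b • Ψ v‖ ^ 2 :=
        hsum _ (Submodule.smul_mem _ _ ⟨v, rfl⟩) _ (Submodule.smul_mem _ _ ⟨v, rfl⟩)
    _ = ‖analysisOperator 𝕜 (a • φ + b • ψ) v‖ ^ 2 := by rw [analysisOperator_smul_add_smul]
    _ = ∑ i, ‖inner 𝕜 (a • φ i + b • ψ i) v‖ ^ 2 := norm_analysisOperator_sq _ v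

end AnalysisOperator

/-- Convex combinations of disjoint frames are frames: if the ranges of the analysis
operators of `{φᵢ}` and `{ψᵢ}` intersect only in `0`, then there are constants
`C, A₀ > 0` with `Σᵢ ⟨v, (1−t)φᵢ + tψᵢ⟩² ≥ (1 − 2t + 2t²) C A₀ ‖v‖²` for all
`t ∈ [0,1]`, `v ∈ ℝ^d`; in particular each `{(1−t)φᵢ + tψᵢ}` is a frame. -/
theorem stmt15 {d N : ℕ}
    (φ ψ : Fin N → EuclideanSpace ℝ (Fin d))
    (hφ : Submodule.span ℝ (Set.range φ) = ⊤)
    (hψ : Submodule.span ℝ (Set.range ψ) = ⊤)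
    (hdisj : Set.range (fun v : EuclideanSpace ℝ (Fin d) => fun i => ⟪v, φ i⟫) ∩
             Set.range (fun v : EuclideanSpace ℝ (Fin d) => fun i => ⟪v, ψ i⟫)
             = {(0 : Fin N → ℝ)}) :
    ∃ C A₀ : ℝ, 0 < C ∧ 0 < A₀ ∧
      ∀ t : ℝ, 0 ≤ t → t ≤ 1 → ∀ v : EuclideanSpace ℝ (Fin d),
        (1 - 2 * t + 2 * t ^ 2) * C * A₀ * ‖v‖ ^ 2 ≤
          ∑ i, ⟪v, (1 - t) • φ i + t • ψ i⟫ ^ 2 := by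
  obtain ⟨C, A₀, hC, hA₀, h⟩ := stmt15_general hφ hψ
    ((disjoint_range_analysisOperator_iff φ ψ).2 (by simpa only [real_inner_comm] using hdisj))
  exact ⟨C, A₀, hC, hA₀, fun t _ _ v => by
    simpa [real_inner_comm, show 1 - 2 * t + 2 * t ^ 2 = (1 - t) ^ 2 + t ^ 2 by ring]
      using h (1 - t) t v⟩
end
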